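/- arXiv:1511.00378 — 3 statements merged into one kernel-verified Lean document; each statement's English description precedes it below -/
import Mathlib

section
/- Let S be an n×n complex Hermitian positive semidefinite matrix and c ≥ 0. Then the capacity-loss function γ ↦ Real.log((det(I + γ·S)).re) − Real.log((det(I + γ_e(γ)·S)).re), where γ_e(γ) = γ/(cγ + 1), is monotone nondecreasing on [0, ∞). In particular the capacity loss caused by CSI difference grows with the SNR γ. -/
open ComplexOrder

/-!
Diagonalizing `S` turns the capacity at SNR `t` into `∑ i, log (1 + t * λ i)` over the eigenvalues
`λ i ≥ 0`, so it suffices to treat one eigenvalue `l`. With `γ_c = γ / (c * γ + 1)`, its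
contribution to the capacity loss is the logarithm of
`(1 + γ * l) / (1 + γ_c * l) = 1 + c * l * (γ * γ_{c + l})`,
and both `γ` and `γ_{c + l}` are nonnegative and nondecreasing in `γ ≥ 0`.
-/

/-- The equivalent SNR `γ_e(γ) = γ / (c γ + 1)` of a channel at SNR `γ` whose CSI-difference
variance parameter is `c`. -/
noncomputable def equivalentSNR (c γ : ℝ) : ℝ := γ / (c * γ + 1)

/-- The capacity `log det (I + t S)` of a MIMO channel at SNR `t`, in nats. For Hermitian `S` the
determinant is real, and taking its real part only moves it from `𝕜` to `ℝ`. -/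
noncomputable def mimoCapacity {𝕜 ι : Type*} [RCLike 𝕜] [Fintype ι] [DecidableEq ι]
    (S : Matrix ι ι 𝕜) (t : ℝ) : ℝ :=
  Real.log (RCLike.re (1 + (t : 𝕜) • S).det)

section ScalarChannel

variable {c l γ : ℝ}

lemma equivalentSNR_nonneg (hc : 0 ≤ c) (hγ : 0 ≤ γ) : 0 ≤ equivalentSNR c γ := by
  unfold equivalentSNR
  positivity

lemma monotoneOn_equivalentSNR (hc : 0 ≤ c) : MonotoneOn (equivalentSNR c) (Set.Ici 0) := by
  intro a (ha : 0 ≤ a) b (hb : 0 ≤ b) hab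
  unfold equivalentSNR
  rw [div_le_div_iff₀ (by positivity) (by positivity)]
  linarith

lemma one_add_mul_div_one_add_equivalentSNR_mul (hc : 0 ≤ c) (hl : 0 ≤ l) (hγ : 0 ≤ γ) :
    (1 + γ * l) / (1 + equivalentSNR c γ * l) = 1 + c * l * (γ * equivalentSNR (c + l) γ) := by
  have hden : 1 + equivalentSNR c γ * l = ((c + l) * γ + 1) / (c * γ + 1) := by
    unfold equivalentSNR
    field_simp
    ring
  rw [hden, equivalentSNR]
  field_simp
  ring

lemma monotoneOn_log_one_add_mul_sub_equivalentSNR (hc : 0 ≤ c) (hl : 0 ≤ l) :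
    MonotoneOn (fun γ ↦ Real.log (1 + γ * l) - Real.log (1 + equivalentSNR c γ * l))
      (Set.Ici 0) := by
  have loss_eq {γ : ℝ} (hγ : 0 ≤ γ) :
      Real.log (1 + γ * l) - Real.log (1 + equivalentSNR c γ * l) =
        Real.log (1 + c * l * (γ * equivalentSNR (c + l) γ)) := by
    have hγe := equivalentSNR_nonneg hc hγ
    rw [← Real.log_div (by positivity) (by positivity),
      one_add_mul_div_one_add_equivalentSNR_mul hc hl hγ]
  intro a (ha : 0 ≤ a) b (hb : 0 ≤ b) hab
  have ha_nonneg := equivalentSNR_nonneg (add_nonneg hc hl) ha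
  have hsnr := monotoneOn_equivalentSNR (add_nonneg hc hl) ha hb hab
  simp only [loss_eq ha, loss_eq hb]
  gcongr

end ScalarChannel

section Diagonalization

variable {ι : Type*} [Fintype ι] [DecidableEq ι]

lemma det_conjStarAlgAut {R : Type*} [CommRing R] [StarRing R] (U : Matrix.unitaryGroup ι R)
    (A : Matrix ι ι R) : (Unitary.conjStarAlgAut R _ U A).det = A.det := by
  rw [Unitary.conjStarAlgAut_apply, Matrix.det_mul_comm, ← mul_assoc, Unitary.coe_star_mul_self,
    one_mul]

variable {𝕜 : Type*} [RCLike 𝕜] {S : Matrix ι ι 𝕜}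

lemma det_one_add_smul_eq_prod_eigenvalues (hS : S.IsHermitian) (z : 𝕜) :
    (1 + z • S).det = ∏ i, (1 + z * (hS.eigenvalues i : 𝕜)) := by
  let D : Matrix ι ι 𝕜 := .diagonal (RCLike.ofReal ∘ hS.eigenvalues)
  calc (1 + z • S).det
      = (Unitary.conjStarAlgAut 𝕜 _ hS.eigenvectorUnitary (1 + z • D)).det := by
        rw [map_add, map_one, map_smul, ← hS.spectral_theorem]
    _ = (1 + z • D).det := det_conjStarAlgAut _ _
    _ = ∏ i, (1 + z * (hS.eigenvalues i : 𝕜)) := by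
        rw [← Matrix.diagonal_one, ← Matrix.diagonal_smul, Matrix.diagonal_add, Matrix.det_diagonal]
        rfl

lemma mimoCapacity_eq_sum_log (hS : S.PosSemidef) {t : ℝ} (ht : 0 ≤ t) :
    mimoCapacity S t = ∑ i, Real.log (1 + t * hS.isHermitian.eigenvalues i) := by
  have hdet : (1 + (t : 𝕜) • S).det = (∏ i, (1 + t * hS.isHermitian.eigenvalues i) : ℝ) := by
    rw [det_one_add_smul_eq_prod_eigenvalues hS.isHermitian]
    push_cast
    rfl
  rw [mimoCapacity, hdet, RCLike.ofReal_re, Real.log_prod]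
  intro i _
  have := hS.eigenvalues_nonneg i
  positivity

end Diagonalization

theorem capacity_loss_monotone_in_snr_general {𝕜 ι : Type*} [RCLike 𝕜] [Fintype ι] [DecidableEq ι]
    {S : Matrix ι ι 𝕜} (hS : S.PosSemidef) {c : ℝ} (hc : 0 ≤ c) :
    MonotoneOn (fun γ ↦ mimoCapacity S γ - mimoCapacity S (equivalentSNR c γ)) (Set.Ici 0) := by
  have loss_eq_sum {γ : ℝ} (hγ : 0 ≤ γ) :
      mimoCapacity S γ - mimoCapacity S (equivalentSNR c γ) =
        ∑ i, (Real.log (1 + γ * hS.isHermitian.eigenvalues i) -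
          Real.log (1 + equivalentSNR c γ * hS.isHermitian.eigenvalues i)) := by
    rw [mimoCapacity_eq_sum_log hS hγ, mimoCapacity_eq_sum_log hS (equivalentSNR_nonneg hc hγ),
      Finset.sum_sub_distrib]
  intro a ha b hb hab
  simp only [loss_eq_sum ha, loss_eq_sum hb]
  exact Finset.sum_le_sum fun i _ ↦
    monotoneOn_log_one_add_mul_sub_equivalentSNR hc (hS.eigenvalues_nonneg i) ha hb hab

/-- The capacity-loss function
`γ ↦ log (det (I + γ • S)).re − log (det (I + (γ/(cγ+1)) • S)).re`
is monotone nondecreasing on `[0, ∞)`. -/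
theorem capacity_loss_monotone_in_snr
    {n : ℕ} (S : Matrix (Fin n) (Fin n) ℂ)
    (hHerm : S.IsHermitian) (hS : S.PosSemidef)
    (c : ℝ) (hc : 0 ≤ c) :
    MonotoneOn
      (fun γ : ℝ =>
        Real.log ((Matrix.det (1 + (γ : ℂ) • S)).re) -
          Real.log ((Matrix.det (1 + ((γ / (c * γ + 1) : ℝ) : ℂ) • S)).re))
      (Set.Ici (0 : ℝ)) :=
  capacity_loss_monotone_in_snr_general hS hc
end

section
/- Let S be an n×n complex Hermitian positive semidefinite matrix and c > 0. Then for every γ ≥ 0, (det(I + (γ/(cγ+1))·S)).re ≤ (det(I + (1/c)·S)).re; that is, the channel capacity at a grouped subcarrier with CSI-difference variance parameter c is uniformly upper-bounded over all SNR values by log det(I + (1/c)·S). -/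
open ComplexOrder

/-!
The coefficients of `det (1 + X • S)` are sums of principal minors of `S`, which are nonnegative
when `S` is positive semidefinite. So `t ↦ det (1 + t • S)` is monotone on `t ≥ 0`, and the
equivalent SNR `γ / (c * γ + 1)` never exceeds `1 / c`.
-/

open Polynomial

theorem eval_le_eval_of_coeff_nonneg {R : Type*} [Semiring R] [PartialOrder R] [IsOrderedRing R]
    {p : R[X]} (hp : ∀ k, 0 ≤ p.coeff k) {s t : R} (hs : 0 ≤ s) (hst : s ≤ t) :
    p.eval s ≤ p.eval t := by
  simp only [eval_eq_sum_range]
  gcongr with k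
  exact hp k

theorem div_mul_add_one_le_one_div {𝕜 : Type*} [Field 𝕜] [PartialOrder 𝕜] [IsStrictOrderedRing 𝕜]
    [PosMulReflectLT 𝕜] {c γ : 𝕜} (hc : 0 < c) (hγ : 0 ≤ γ) :
    γ / (c * γ + 1) ≤ 1 / c := by
  rw [div_le_div_iff₀ (by positivity) hc, one_mul, mul_comm γ]
  exact le_add_of_nonneg_right zero_le_one

variable {n R 𝕜 : Type*} [DecidableEq n]

/-- A P₀-matrix: a square matrix, not necessarily Hermitian, all of whose principal minors are
nonnegative. The minors are indexed by finite sets of rows. Over `ℂ`, nonnegativity in the order of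
`ComplexOrder` includes being real. -/
def IsP0Matrix [CommRing R] [PartialOrder R] (M : Matrix n n R) : Prop :=
  ∀ s : Finset n, 0 ≤ (M.submatrix (Subtype.val : s → n) Subtype.val).det

theorem IsP0Matrix.of_posSemidef [RCLike 𝕜] {M : Matrix n n 𝕜} (hM : M.PosSemidef) :
    IsP0Matrix M :=
  fun _ ↦ (hM.submatrix _).det_nonneg

variable [Fintype n]

theorem eval_det_one_add_X_smul [CommRing R] (M : Matrix n n R) (t : R) :
    (1 + (X : R[X]) • M.map C).det.eval t = (1 + t • M).det := by
  simp [eval_det, ← Matrix.smul_eq_mul_diagonal]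

theorem IsP0Matrix.det_one_add_smul_le [CommRing R] [PartialOrder R] [IsOrderedRing R]
    {M : Matrix n n R} (hM : IsP0Matrix M) {s t : R} (hs : 0 ≤ s) (hst : s ≤ t) :
    (1 + s • M).det ≤ (1 + t • M).det := by
  have coeff_nonneg (k : ℕ) : 0 ≤ (1 + (X : R[X]) • M.map C).det.coeff k := by
    rw [Matrix.coeff_det_one_add_X_smul_eq_sum_minors]
    exact Finset.sum_nonneg fun u _ ↦ hM u
  simpa only [eval_det_one_add_X_smul] using eval_le_eval_of_coeff_nonneg coeff_nonneg hs hst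

theorem det_equivalent_snr_le_det_inv_c_general [Field 𝕜] [PartialOrder 𝕜]
    [IsStrictOrderedRing 𝕜] [PosMulReflectLT 𝕜] {S : Matrix n n 𝕜} (hS : IsP0Matrix S)
    {c γ : 𝕜} (hc : 0 < c) (hγ : 0 ≤ γ) :
    (1 + (γ / (c * γ + 1)) • S).det ≤ (1 + (1 / c) • S).det :=
  hS.det_one_add_smul_le (by positivity) (div_mul_add_one_le_one_div hc hγ)

/-- The determinant at the equivalent SNR `γ/(cγ+1)` is uniformly bounded above
by the determinant at SNR `1/c`, for every `γ ≥ 0`. -/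
theorem det_equivalent_snr_le_det_inv_c
    {n : ℕ} (S : Matrix (Fin n) (Fin n) ℂ)
    (hHerm : S.IsHermitian) (hS : S.PosSemidef)
    (c : ℝ) (hc : 0 < c) :
    ∀ γ : ℝ, 0 ≤ γ →
      (Matrix.det (1 + ((γ / (c * γ + 1) : ℝ) : ℂ) • S)).re ≤
        (Matrix.det (1 + ((1 / c : ℝ) : ℂ) • S)).re := by
  intro γ hγ
  exact_mod_cast Complex.re_le_re <| det_equivalent_snr_le_det_inv_c_general
    (.of_posSemidef hS) (Complex.zero_lt_real.mpr hc) (Complex.zero_le_real.mpr hγ)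
end

section
/- (Rhombus inclusion underlying Theorem 1.) Let φ, ψ : ℝ → ℝ be concave even functions with φ(0) = 0 and ψ(0) = 0, let β ∈ (0, 1], and let F > 0 and T > 0 satisfy φ(F) ≥ Real.log β and ψ(T) ≥ Real.log β. Then for every (t, f) ∈ ℝ × ℝ with |t|/T + |f|/F ≤ 1, one has β ≤ Real.exp(φ(f)) · Real.exp(ψ(t)). That is, every time–frequency point in the closed rhombus with transverse semi-diagonal T and longitudinal semi-diagonal F satisfies the correlation threshold R_f(f)·R_t(t) ≥ β. -/
/-!
Concavity of `φ` and `ψ` makes the joint correlation `(t, f) ↦ R_f f * R_t t` quasiconcave, so the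
points meeting the threshold `β` form a convex set. The rhombus is the convex hull of its four
vertices, and there one of the two factors is `1` while the other is at least `β`.
-/

open scoped Pointwise

section AbsConvex

variable {E : Type*} [AddCommGroup E] [Module ℝ E] {s : Set E}

theorem absConvex_inter_neg (hs : Convex ℝ s) : AbsConvex ℝ (s ∩ -s) := by
  have hconvex : Convex ℝ (s ∩ -s) := hs.inter hs.neg
  exact ⟨(balanced_iff_neg_mem hconvex).2 fun x hx ↦ ⟨hx.2, by simpa using hx.1⟩, hconvex⟩

theorem smul_add_smul_mem_of_absConvex (hs : AbsConvex ℝ s) {x y : E} (hx : x ∈ s) (hy : y ∈ s)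
    {a b : ℝ} (hab : |a| + |b| ≤ 1) : a • x + b • y ∈ s := by
  have smul_mem_abs_smul (c : ℝ) {z : E} (hz : z ∈ s) : c • z ∈ |c| • s :=
    hs.1.smul_mono (by simp) (Set.smul_mem_smul_set hz)
  have hsum : a • x + b • y ∈ (|a| + |b|) • s := by
    rw [hs.2.add_smul (abs_nonneg a) (abs_nonneg b)]
    exact Set.add_mem_add (smul_mem_abs_smul a hx) (smul_mem_abs_smul b hy)
  have hnorm : ‖|a| + |b|‖ ≤ 1 := by
    rwa [Real.norm_of_nonneg (add_nonneg (abs_nonneg a) (abs_nonneg b))]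
  exact hs.1 _ hnorm hsum

end AbsConvex

/-- The vertices of the rhombus with semi-diagonal `T` along the time-lag axis (first coordinate)
and `F` along the frequency-lag axis (second coordinate), where the correlation threshold has to be
checked. -/
def rhombusVertices (T F : ℝ) : Set (ℝ × ℝ) :=
  {(T, 0), (-T, 0), (0, F), (0, -F)}

theorem mem_of_rhombusVertices_subset {s : Set (ℝ × ℝ)} (hs : Convex ℝ s) {T F : ℝ} (hT : 0 < T)
    (hF : 0 < F) (hvertices : rhombusVertices T F ⊆ s) {t f : ℝ} (h : |t| / T + |f| / F ≤ 1) :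
    (t, f) ∈ s := by
  have hT_mem : (T, 0) ∈ s ∩ -s :=
    ⟨hvertices (by simp [rhombusVertices]), hvertices (by simp [rhombusVertices])⟩
  have hF_mem : (0, F) ∈ s ∩ -s :=
    ⟨hvertices (by simp [rhombusVertices]), hvertices (by simp [rhombusVertices])⟩
  have hcoeff : |t / T| + |f / F| ≤ 1 := by
    rwa [abs_div, abs_div, abs_of_pos hT, abs_of_pos hF]
  have hdecomp : (t / T) • (T, (0 : ℝ)) + (f / F) • ((0 : ℝ), F) = (t, f) := by
    simp [hT.ne', hF.ne']
  rw [← hdecomp]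
  exact (smul_add_smul_mem_of_absConvex (absConvex_inter_neg hs) hT_mem hF_mem hcoeff).1

theorem le_exp_mul_exp_of_mem_rhombusVertices {g h : ℝ → ℝ} (hg : Function.Even g)
    (hh : Function.Even h) (hg0 : g 0 = 0) (hh0 : h 0 = 0) {β T F : ℝ} (hβ : 0 < β)
    (hT : Real.log β ≤ g T) (hF : Real.log β ≤ h F) {p : ℝ × ℝ} (hp : p ∈ rhombusVertices T F) :
    β ≤ Real.exp (g p.1) * Real.exp (h p.2) := by
  rw [Real.log_le_iff_le_exp hβ] at hT hF
  rcases hp with rfl | rfl | rfl | rfl <;> simpa [hg T, hh F, hg0, hh0]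

theorem quasiconcaveOn_exp_mul_exp {E₁ E₂ : Type*} [AddCommGroup E₁] [Module ℝ E₁]
    [AddCommGroup E₂] [Module ℝ E₂] {s : Set E₁} {t : Set E₂} {g : E₁ → ℝ} {h : E₂ → ℝ}
    (hg : ConcaveOn ℝ s g) (hh : ConcaveOn ℝ t h) :
    QuasiconcaveOn ℝ (s ×ˢ t) fun p ↦ Real.exp (g p.1) * Real.exp (h p.2) := by
  have hconvex : Convex ℝ (s ×ˢ t) := hg.1.prod hh.1
  have hfst : ConcaveOn ℝ (s ×ˢ t) fun p ↦ g p.1 :=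
    (hg.comp_linearMap (LinearMap.fst ℝ E₁ E₂)).subset (fun _ hp ↦ hp.1) hconvex
  have hsnd : ConcaveOn ℝ (s ×ˢ t) fun p ↦ h p.2 :=
    (hh.comp_linearMap (LinearMap.snd ℝ E₁ E₂)).subset (fun _ hp ↦ hp.2) hconvex
  simp only [← Real.exp_add]
  exact (hfst.add hsnd).quasiconcaveOn.monotone_comp (g := Real.exp) Real.exp_monotone

theorem rhombus_satisfies_correlation_threshold_general {α : Type*} [LE α] {s : Set (ℝ × ℝ)}
    {R : ℝ × ℝ → α} (hR : QuasiconcaveOn ℝ s R) {β : α} {T F : ℝ} (hT : 0 < T) (hF : 0 < F)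
    (hs : rhombusVertices T F ⊆ s) (hβ : ∀ p ∈ rhombusVertices T F, β ≤ R p) {t f : ℝ}
    (h : |t| / T + |f| / F ≤ 1) : β ≤ R (t, f) :=
  (mem_of_rhombusVertices_subset (hR β) hT hF (fun p hp ↦ ⟨hs hp, hβ p hp⟩) h).2

/-- Rhombus inclusion underlying Theorem 1: if `R_f = exp ∘ φ`, `R_t = exp ∘ ψ`
with `φ`, `ψ` concave even functions vanishing at `0`, `β ∈ (0, 1]`, and
`F, T > 0` satisfy `φ F ≥ log β` and `ψ T ≥ log β`, then every point `(t, f)`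
of the closed rhombus `|t|/T + |f|/F ≤ 1` satisfies
`β ≤ R_f f * R_t t`. -/
theorem rhombus_satisfies_correlation_threshold
    (φ ψ : ℝ → ℝ)
    (hφ : ConcaveOn ℝ Set.univ φ) (hψ : ConcaveOn ℝ Set.univ ψ)
    (hφeven : ∀ x : ℝ, φ (-x) = φ x) (hψeven : ∀ x : ℝ, ψ (-x) = ψ x)
    (hφ0 : φ 0 = 0) (hψ0 : ψ 0 = 0)
    (β : ℝ) (hβ0 : 0 < β) (hβ1 : β ≤ 1)
    (F T : ℝ) (hF : 0 < F) (hT : 0 < T)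
    (hφF : Real.log β ≤ φ F) (hψT : Real.log β ≤ ψ T) :
    ∀ t f : ℝ, |t| / T + |f| / F ≤ 1 →
      β ≤ Real.exp (φ f) * Real.exp (ψ t) := by
  intro t f h
  rw [mul_comm]
  exact rhombus_satisfies_correlation_threshold_general (quasiconcaveOn_exp_mul_exp hψ hφ) hT hF
    (by simp) (fun _ ↦ le_exp_mul_exp_of_mem_rhombusVertices hψeven hφeven hψ0 hφ0 hβ0 hψT hφF) h
end
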